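/- arXiv:1906.06872 — 3 statements merged into one kernel-verified Lean document; each statement's English description precedes it below -/
import Mathlib

section
/- (Sufficiency part of Theorem 3.1.) Let N ≥ 2, let F(·,t) : ℝⁿ × ℝⁿ ⇉ ℝⁿ be convex set-valued mappings for t = 0,…,N−2, Q₀, Q₁ ⊆ ℝⁿ nonempty convex sets, and φ : ℝⁿ × ℝⁿ → ℝ ∪ {+∞} convex. Let {x̃_t}_{t=0}^N be a feasible trajectory of (P_D), and suppose there exist vectors x*_t (t = 0,…,N) and μ*_t (t = 0,…,N−1) such that: (i) (x*_t − μ*_t, μ*_{t+1}) ∈ F*(x*_{t+2}; (x̃_t, x̃_{t+1}, x̃_{t+2}), t) and x̃_{t+2} ∈ F_A(x̃_t, x̃_{t+1}, x*_{t+2}, t) for t = 0,…,N−2; (ii) μ*₀ − x*₀ ∈ K*_{Q₀}(x̃₀) and −x*₁ ∈ K*_{Q₁}(x̃₁); (iii) (μ*_{N−1} − x*_{N−1}, −x*_N) ∈ ∂φ(x̃_{N−1}, x̃_N). Then {x̃_t} is optimal: φ(x̃_{N−1}, x̃_N) ≤ φ(x_{N−1}, x_N) for every feasible trajectory {x_t}_{t=0}^N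 of (P_D). -/
open scoped RealInnerProductSpace Pointwise
open MeasureTheory Matrix

noncomputable section

abbrev En (n : ℕ) := EuclideanSpace ℝ (Fin n)

/-- Fenchel conjugate of an extended-real-valued function on a product of two
inner product spaces (inner product of pairs is the sum of componentwise inner products). -/
def fconj2 {V W : Type*} [NormedAddCommGroup V] [InnerProductSpace ℝ V]
    [NormedAddCommGroup W] [InnerProductSpace ℝ W]
    (g : V × W → EReal) (u : V) (w : W) : EReal :=
  ⨆ p : V × W, ((⟪p.1, u⟫ + ⟪p.2, w⟫ : ℝ) : EReal) - g p

/-- Fenchel conjugate on a triple product. -/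
def fconj3 {V : Type*} [NormedAddCommGroup V] [InnerProductSpace ℝ V]
    (g : V × V × V → EReal) (u₁ u₂ u₃ : V) : EReal :=
  ⨆ p : V × V × V,
    ((⟪p.1, u₁⟫ + ⟪p.2.1, u₂⟫ + ⟪p.2.2, u₃⟫ : ℝ) : EReal) - g p

/-- Fenchel conjugate on a finite power of an inner product space. -/
def fconjPi {N : ℕ} {V : Type*} [NormedAddCommGroup V] [InnerProductSpace ℝ V]
    (g : (Fin N → V) → EReal) (u : Fin N → V) : EReal :=
  ⨆ w : Fin N → V, ((∑ i, ⟪w i, u i⟫ : ℝ) : EReal) - g w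

/-- Support function `W_A`. -/
def suppFn {V : Type*} [NormedAddCommGroup V] [InnerProductSpace ℝ V]
    (A : Set V) (u : V) : EReal :=
  ⨆ x ∈ A, ((⟪x, u⟫ : ℝ) : EReal)

/-- The function `M_F(x*,y*,z*) = inf {⟨x,x*⟩+⟨y,y*⟩-⟨z,z*⟩ : (x,y,z) ∈ gph F}`. -/
def MF {V : Type*} [NormedAddCommGroup V] [InnerProductSpace ℝ V]
    (F : V → V → Set V) (x' y' z' : V) : EReal :=
  ⨅ (x : V) (y : V) (z : V) (_ : z ∈ F x y),
    ((⟪x, x'⟫ + ⟪y, y'⟫ - ⟪z, z'⟫ : ℝ) : EReal)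

/-- Hamiltonian `H_F(x,y,z*) = sup {⟨z,z*⟩ : z ∈ F(x,y)}` (`⊥` if `F(x,y) = ∅`). -/
def HF {V : Type*} [NormedAddCommGroup V] [InnerProductSpace ℝ V]
    (F : V → V → Set V) (x y z' : V) : EReal :=
  ⨆ z ∈ F x y, ((⟪z, z'⟫ : ℝ) : EReal)

/-- Locally adjoint mapping `F*(z*;(x,y,·))`. -/
def LAM {V : Type*} [NormedAddCommGroup V] [InnerProductSpace ℝ V]
    (F : V → V → Set V) (z' x y : V) : Set (V × V) :=
  {p | ∀ x₁ y₁ : V, HF F x₁ y₁ z' - HF F x y z' ≤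
    ((⟪p.1, x₁ - x⟫ + ⟪p.2, y₁ - y⟫ : ℝ) : EReal)}

/-- Argmaximum set `F_A(x,y,z*)`. -/
def FA {V : Type*} [NormedAddCommGroup V] [InnerProductSpace ℝ V]
    (F : V → V → Set V) (x y z' : V) : Set V :=
  {z ∈ F x y | ((⟪z, z'⟫ : ℝ) : EReal) = HF F x y z'}

/-- Subdifferential of an extended-real-valued function on a product of two spaces. -/
def subdiff2 {V W : Type*} [NormedAddCommGroup V] [InnerProductSpace ℝ V]
    [NormedAddCommGroup W] [InnerProductSpace ℝ W]
    (g : V × W → EReal) (u : V × W) : Set (V × W) :=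
  {p | ∀ v : V × W,
    ((⟪p.1, v.1 - u.1⟫ + ⟪p.2, v.2 - u.2⟫ : ℝ) : EReal) ≤ g v - g u}

/-- Subdifferential of a real-valued function on a product of two spaces. -/
def subdiffR2 {V W : Type*} [NormedAddCommGroup V] [InnerProductSpace ℝ V]
    [NormedAddCommGroup W] [InnerProductSpace ℝ W]
    (g : V × W → ℝ) (u : V × W) : Set (V × W) :=
  {p | ∀ v : V × W, ⟪p.1, v.1 - u.1⟫ + ⟪p.2, v.2 - u.2⟫ ≤ g v - g u}

/-- Dual cone to the cone of tangent directions of a convex set `Q` at `x₀`. -/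
def Kstar {V : Type*} [NormedAddCommGroup V] [InnerProductSpace ℝ V]
    (Q : Set V) (x₀ : V) : Set V :=
  {x' | ∀ x ∈ Q, 0 ≤ ⟪x', x - x₀⟫}

/-- Graph of a set-valued mapping. -/
def gph {V : Type*} (F : V → V → Set V) : Set (V × V × V) :=
  {p | p.2.2 ∈ F p.1 p.2.1}

/-- Convexity of an extended-real-valued function. -/
def ERealConvexOn {V : Type*} [AddCommGroup V] [Module ℝ V] (g : V → EReal) : Prop :=
  ∀ x y : V, ∀ a b : ℝ, 0 ≤ a → 0 ≤ b → a + b = 1 →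
    g (a • x + b • y) ≤ (a : EReal) * g x + (b : EReal) * g y

/-- `g` is absolutely continuous on `[0,1]` with derivative `g' ∈ L¹`. -/
def AC {n : ℕ} (g g' : ℝ → En n) : Prop :=
  MeasureTheory.IntegrableOn g' (Set.Icc (0 : ℝ) 1) ∧
    ∀ t ∈ Set.Icc (0 : ℝ) 1, g t = g 0 + ∫ s in (0 : ℝ)..t, g' s

/-- Feasible trajectory of the continuous problem `(P_C)`. -/
structure FeasTraj {n : ℕ} (F : ℝ → En n → En n → Set (En n)) (Q₀ Q₁ : Set (En n))
    (x x' x'' : ℝ → En n) : Prop where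
  int' : MeasureTheory.IntegrableOn x' (Set.Icc (0 : ℝ) 1)
  int'' : MeasureTheory.IntegrableOn x'' (Set.Icc (0 : ℝ) 1)
  hx : ∀ t ∈ Set.Icc (0 : ℝ) 1, x t = x 0 + ∫ s in (0 : ℝ)..t, x' s
  hx' : ∀ t ∈ Set.Icc (0 : ℝ) 1, x' t = x' 0 + ∫ s in (0 : ℝ)..t, x'' s
  incl : ∀ᵐ t ∂(MeasureTheory.volume.restrict (Set.Icc (0 : ℝ) 1)), x'' t ∈ F t (x t) (x' t)
  q0 : x 0 ∈ Q₀
  q1 : x' 0 ∈ Q₁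

/-!
Along a feasible trajectory `x`, write `d = x - x̃` and
`B t = ⟪x'ₜ - μ'ₜ, dₜ⟫ + ⟪x'ₜ₊₁, dₜ₊₁⟫`. Since `x̃ₜ₊₂` attains the Hamiltonian, the adjoint
inclusion at time `t` yields `B (t + 1) ≤ B t`. Transversality at the initial sets gives `B 0 ≤ 0`,
hence `B ≤ 0` at the terminal time, where `-B` is the value on `d` of the subgradient of `φ`: the
subgradient inequality then shows that `φ` is no smaller along `x` than along `x̃`.
-/

-- `EReal.sub_nonneg` excludes `⊤ - ⊤` and `⊥ - ⊥`; as both equal `⊥`, this implication survives.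
lemma le_of_ereal_sub_nonneg {a b : EReal} (h : 0 ≤ b - a) : a ≤ b := by
  cases a <;> cases b <;> simp_all [← EReal.coe_sub]

lemma le_of_mem_subdiff2 {V W : Type*} [NormedAddCommGroup V] [InnerProductSpace ℝ V]
    [NormedAddCommGroup W] [InnerProductSpace ℝ W] {g : V × W → EReal} {u v : V × W} {p : V × W}
    (hp : p ∈ subdiff2 g u) (hpv : 0 ≤ ⟪p.1, v.1 - u.1⟫ + ⟪p.2, v.2 - u.2⟫) :
    g u ≤ g v :=
  le_of_ereal_sub_nonneg ((EReal.coe_nonneg.mpr hpv).trans (hp v))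

section DiscreteInclusion

variable {V : Type*} [NormedAddCommGroup V] [InnerProductSpace ℝ V]

lemma inner_le_HF {F : V → V → Set V} {x y z : V} (hz : z ∈ F x y) (z' : V) :
    ((⟪z, z'⟫ : ℝ) : EReal) ≤ HF F x y z' :=
  le_iSup₂ (f := fun w (_ : w ∈ F x y) ↦ ((⟪w, z'⟫ : ℝ) : EReal)) z hz

lemma inner_sub_le_of_mem_LAM {F : V → V → Set V} {x y z z' x₁ y₁ z₁ : V} {p : V × V}
    (hp : p ∈ LAM F z' x y) (hz : z ∈ FA F x y z') (hz₁ : z₁ ∈ F x₁ y₁) :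
    ⟪z', z₁ - z⟫ ≤ ⟪p.1, x₁ - x⟫ + ⟪p.2, y₁ - y⟫ := by
  rw [← EReal.coe_le_coe_iff]
  calc ((⟪z', z₁ - z⟫ : ℝ) : EReal)
      = (⟪z₁, z'⟫ : ℝ) - (⟪z, z'⟫ : ℝ) := by
        rw [← EReal.coe_sub, ← inner_sub_left, real_inner_comm]
    _ ≤ HF F x₁ y₁ z' - HF F x y z' := EReal.sub_le_sub (inner_le_HF hz₁ z') hz.2.ge
    _ ≤ _ := hp x₁ y₁

/-- Feasible trajectories of the discrete problem `(P_D)`, constrained by the `N` inclusions at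
times `t < N`. Thus the terminal pair is `(x N, x (N + 1))`, and `N` is one less than the paper's
horizon. Values of `x` beyond time `N + 1` are irrelevant. -/
def feasibleTrajectories (F : ℕ → V → V → Set V) (Q₀ Q₁ : Set V) (N : ℕ) : Set (ℕ → V) :=
  {x | x 0 ∈ Q₀ ∧ x 1 ∈ Q₁ ∧ ∀ t < N, x (t + 2) ∈ F t (x t) (x (t + 1))}

/-- Pairing of the adjoint variables `(x', μ')` with a variation `d` of the trajectory across the
times `t` and `t + 1`; the Lyapunov function of the optimality argument. -/
def adjointPairing (x' μ' d : ℕ → V) (t : ℕ) : ℝ :=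
  ⟪x' t - μ' t, d t⟫ + ⟪x' (t + 1), d (t + 1)⟫

lemma adjointPairing_succ_le {F : V → V → Set V} {x xt x' μ' : ℕ → V} {t : ℕ}
    (hLAM : (x' t - μ' t, μ' (t + 1)) ∈ LAM F (x' (t + 2)) (xt t) (xt (t + 1)))
    (hFA : xt (t + 2) ∈ FA F (xt t) (xt (t + 1)) (x' (t + 2)))
    (hx : x (t + 2) ∈ F (x t) (x (t + 1))) :
    adjointPairing x' μ' (x - xt) (t + 1) ≤ adjointPairing x' μ' (x - xt) t := by
  have hadj := inner_sub_le_of_mem_LAM hLAM hFA hx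
  simp only [adjointPairing, Pi.sub_apply, inner_sub_left (x' (t + 1))]
  linarith

lemma adjointPairing_zero_nonpos {Q₀ Q₁ : Set V} {x xt x' μ' : ℕ → V}
    (h₀ : μ' 0 - x' 0 ∈ Kstar Q₀ (xt 0)) (h₁ : -x' 1 ∈ Kstar Q₁ (xt 1))
    (hx₀ : x 0 ∈ Q₀) (hx₁ : x 1 ∈ Q₁) :
    adjointPairing x' μ' (x - xt) 0 ≤ 0 := by
  have hpair₀ : 0 ≤ -⟪x' 0 - μ' 0, x 0 - xt 0⟫ := by
    simpa only [← inner_neg_left, neg_sub] using h₀ (x 0) hx₀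
  have hpair₁ : 0 ≤ -⟪x' 1, x 1 - xt 1⟫ := by
    simpa only [inner_neg_left] using h₁ (x 1) hx₁
  simp only [adjointPairing, Pi.sub_apply, zero_add]
  linarith

lemma adjointPairing_nonpos {F : ℕ → V → V → Set V} {Q₀ Q₁ : Set V} {N : ℕ} {x xt x' μ' : ℕ → V}
    (hLAM : ∀ t < N, (x' t - μ' t, μ' (t + 1)) ∈ LAM (F t) (x' (t + 2)) (xt t) (xt (t + 1)))
    (hFA : ∀ t < N, xt (t + 2) ∈ FA (F t) (xt t) (xt (t + 1)) (x' (t + 2)))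
    (h₀ : μ' 0 - x' 0 ∈ Kstar Q₀ (xt 0)) (h₁ : -x' 1 ∈ Kstar Q₁ (xt 1))
    (hx : x ∈ feasibleTrajectories F Q₀ Q₁ N) {t : ℕ} (ht : t ≤ N) :
    adjointPairing x' μ' (x - xt) t ≤ 0 := by
  obtain ⟨hx₀, hx₁, hxF⟩ := hx
  induction t with
  | zero => exact adjointPairing_zero_nonpos h₀ h₁ hx₀ hx₁
  | succ t ih =>
    exact (adjointPairing_succ_le (hLAM t ht) (hFA t ht) (hxF t ht)).trans (ih (Nat.le_of_lt ht))

theorem stmt2_general {F : ℕ → V → V → Set V} {Q₀ Q₁ : Set V} {N : ℕ} {φ : V × V → EReal}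
    {xt x' μ' : ℕ → V}
    (hLAM : ∀ t < N, (x' t - μ' t, μ' (t + 1)) ∈ LAM (F t) (x' (t + 2)) (xt t) (xt (t + 1)))
    (hFA : ∀ t < N, xt (t + 2) ∈ FA (F t) (xt t) (xt (t + 1)) (x' (t + 2)))
    (h₀ : μ' 0 - x' 0 ∈ Kstar Q₀ (xt 0)) (h₁ : -x' 1 ∈ Kstar Q₁ (xt 1))
    (hφ : (μ' N - x' N, -x' (N + 1)) ∈ subdiff2 φ (xt N, xt (N + 1))) :
    IsMinOn (fun x ↦ φ (x N, x (N + 1))) (feasibleTrajectories F Q₀ Q₁ N) xt := by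
  refine isMinOn_iff.mpr fun x hx ↦ le_of_mem_subdiff2 hφ ?_
  calc 0 ≤ -adjointPairing x' μ' (x - xt) N :=
        neg_nonneg.mpr (adjointPairing_nonpos hLAM hFA h₀ h₁ hx le_rfl)
    _ = ⟪μ' N - x' N, x N - xt N⟫ + ⟪-x' (N + 1), x (N + 1) - xt (N + 1)⟫ := by
        rw [adjointPairing, neg_add, ← inner_neg_left, ← inner_neg_left, neg_sub, Pi.sub_apply,
          Pi.sub_apply]

end DiscreteInclusion

/-- sufficiency part of Theorem 3.1. -/
theorem stmt2 {n N : ℕ} (hN : 2 ≤ N)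
    (F : ℕ → En n → En n → Set (En n))
    (hFconv : ∀ t, Convex ℝ (gph (F t)))
    (Q₀ Q₁ : Set (En n)) (hQ₀c : Convex ℝ Q₀) (hQ₁c : Convex ℝ Q₁)
    (hQ₀ne : Q₀.Nonempty) (hQ₁ne : Q₁.Nonempty)
    (φ : En n × En n → EReal) (hφconv : ERealConvexOn φ)
    (xt : ℕ → En n)
    (hfeas : ∀ t, t ≤ N - 2 → xt (t + 2) ∈ F t (xt t) (xt (t + 1)))
    (hxt0 : xt 0 ∈ Q₀) (hxt1 : xt 1 ∈ Q₁)
    (x' μ' : ℕ → En n)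
    (hEL : ∀ t, t ≤ N - 2 →
      (x' t - μ' t, μ' (t + 1)) ∈ LAM (F t) (x' (t + 2)) (xt t) (xt (t + 1)) ∧
      xt (t + 2) ∈ FA (F t) (xt t) (xt (t + 1)) (x' (t + 2)))
    (htr0 : μ' 0 - x' 0 ∈ Kstar Q₀ (xt 0)) (htr1 : -(x' 1) ∈ Kstar Q₁ (xt 1))
    (htrN : (μ' (N - 1) - x' (N - 1), -(x' N)) ∈ subdiff2 φ (xt (N - 1), xt N)) :
    ∀ x : ℕ → En n, (∀ t, t ≤ N - 2 → x (t + 2) ∈ F t (x t) (x (t + 1))) →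
      x 0 ∈ Q₀ → x 1 ∈ Q₁ → φ (xt (N - 1), xt N) ≤ φ (x (N - 1), x N) := by
  obtain ⟨k, rfl⟩ := Nat.exists_eq_add_of_le' hN
  exact fun x hx hx₀ hx₁ ↦ isMinOn_iff.mp
    (stmt2_general (N := k + 1) (fun t ht ↦ (hEL t (Nat.le_of_lt_succ ht)).1)
      (fun t ht ↦ (hEL t (Nat.le_of_lt_succ ht)).2) htr0 htr1 htrN)
    x ⟨hx₀, hx₁, fun t ht ↦ hx t (Nat.le_of_lt_succ ht)⟩
end
end

section
/- (Lemma 4.2.) Let δ > 0, let F : ℝⁿ × ℝⁿ ⇉ ℝⁿ be a convex set-valued mapping, and let G(x,y) = {2y − x + δ²v : v ∈ F(x, (y−x)/δ)}. Given vectors x̄*(t), x̄*(t+δ), x̄*(t+2δ), μ̄*(t), μ̄*(t+δ) in ℝⁿ, set x*(s) = δ·x̄*(s), μ*(s) = δ·μ̄*(s), v*(t+δ) = (μ*(t+δ) − 2x*(t+2δ))/δ and v*(t) = (μ*(t) − 2x*(t+δ))/δ. Then M_G(x̄*(t) − μ̄*(t), μ̄*(t+δ), x̄*(t+2δ)) =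 δ · M_F(Δ²x*(t) + Δ₋v*(t+δ), v*(t+δ), x*(t+2δ)), where Δ²x*(t) = (x*(t+2δ) − 2x*(t+δ) + x*(t))/δ² and Δ₋v*(t+δ) = (v*(t+δ) − v*(t))/δ. -/
open scoped RealInnerProductSpace Pointwise
open MeasureTheory Matrix

noncomputable section

/-!
With `u = (y - x) / δ`, a point `(x, y, z)` of the graph of `G` is the triple of samples
`(x, x + δ u, x + 2 δ u + δ² v)` whose initial value, first and second difference quotients
`(x, u, v)` form a point of the graph of `F`. Pulling the linear functional that defines `M_G` back
along this linear substitution, that is, applying its transpose to `(x*, y*, z*)`, gives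
`M_G (x*, y*, z*) = M_F (x* + y* - z*, δ (y* - 2 z*), δ² z*)`. For the dual vectors at hand the
arguments on the right are `δ` times the discrete adjoint expressions, and `M_F` is positively
homogeneous.
-/

theorem ereal_mul_iInf_of_pos {ι : Sort*} {a : EReal} (ha : 0 < a) (ha' : a ≠ ⊤)
    (f : ι → EReal) : a * ⨅ i, f i = ⨅ i, a * f i :=
  GaloisConnection.u_iInf (l := (· / a)) fun _ _ ↦ EReal.div_le_iff_le_mul ha ha'

section Discretization

variable {𝕜 V : Type*} [Field 𝕜] [AddCommGroup V] [Module 𝕜 V]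

/-- The discretization with step `δ` of the second-order inclusion `x'' ∈ F (x, x')`: the possible
values of `x (t + 2δ)` given `x (t)` and `x (t + δ)`, with derivatives replaced by forward
difference quotients. -/
def discretization (δ : 𝕜) (F : V → V → Set V) (x y : V) : Set V :=
  {z | ∃ v ∈ F x (δ⁻¹ • (y - x)), z = (2 : 𝕜) • y - x + (δ ^ 2) • v}

/-- The samples at `t`, `t + δ`, `t + 2δ` recovered from the triple formed by the value at `t` and
the first and second forward difference quotients at `t`. -/
def samples (δ : 𝕜) (p : V × V × V) : V × V × V :=
  (p.1, p.1 + δ • p.2.1, p.1 + (2 * δ) • p.2.1 + (δ ^ 2) • p.2.2)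

theorem gph_discretization {δ : 𝕜} (hδ : δ ≠ 0) (F : V → V → Set V) :
    gph (discretization δ F) = samples δ '' gph F := by
  ext ⟨x, y, z⟩
  constructor
  · rintro ⟨v, hv, hz : z = _⟩
    refine ⟨(x, δ⁻¹ • (y - x), v), hv, ?_⟩
    have hy : x + δ • δ⁻¹ • (y - x) = y := by
      rw [smul_inv_smul₀ hδ, add_sub_cancel]
    have hz' : x + (2 * δ) • δ⁻¹ • (y - x) + δ ^ 2 • v = z := by
      rw [hz, mul_smul, smul_inv_smul₀ hδ]
      module
    exact Prod.ext rfl (Prod.ext hy hz')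
  · rintro ⟨⟨x, u, v⟩, hv : v ∈ F x u, ⟨⟩⟩
    refine ⟨v, ?_, by module⟩
    rwa [add_sub_cancel_left, inv_smul_smul₀ hδ]

end Discretization

section InnerProductSpace

variable {V : Type*} [NormedAddCommGroup V] [InnerProductSpace ℝ V]

theorem MF_eq_iInf_gph (F : V → V → Set V) (x' y' z' : V) :
    MF F x' y' z' =
      ⨅ p ∈ gph F, ((⟪p.1, x'⟫ + ⟪p.2.1, y'⟫ - ⟪p.2.2, z'⟫ : ℝ) : EReal) := by
  simp only [MF, gph, iInf_prod, Set.mem_ofPred_eq]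

theorem MF_smul {c : ℝ} (hc : 0 < c) (F : V → V → Set V) (x' y' z' : V) :
    MF F (c • x') (c • y') (c • z') = (c : EReal) * MF F x' y' z' := by
  simp only [MF, ereal_mul_iInf_of_pos (EReal.coe_pos.mpr hc) (EReal.coe_ne_top c),
    ← EReal.coe_mul, mul_sub, mul_add, real_inner_smul_right]

theorem inner_samples (δ : ℝ) (p : V × V × V) (x' y' z' : V) :
    ⟪(samples δ p).1, x'⟫ + ⟪(samples δ p).2.1, y'⟫ - ⟪(samples δ p).2.2, z'⟫ =
      ⟪p.1, x' + y' - z'⟫ + ⟪p.2.1, δ • (y' - (2 : ℝ) • z')⟫ - ⟪p.2.2, δ ^ 2 • z'⟫ := by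
  simp only [samples, inner_add_left, inner_add_right, inner_sub_right, real_inner_smul_left,
    real_inner_smul_right]
  ring

theorem MF_discretization {δ : ℝ} (hδ : δ ≠ 0) (F : V → V → Set V) (x' y' z' : V) :
    MF (discretization δ F) x' y' z' =
      MF F (x' + y' - z') (δ • (y' - (2 : ℝ) • z')) (δ ^ 2 • z') := by
  simp only [MF_eq_iInf_gph, gph_discretization hδ, iInf_image, inner_samples]

theorem stmt8_general (δ : ℝ) (hδ : 0 < δ) (F G : V → V → Set V)
    (hG : ∀ x y : V,
      G x y = {z | ∃ v ∈ F x (δ⁻¹ • (y - x)), z = (2 : ℝ) • y - x + (δ ^ 2) • v})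
    (xb0 xb1 xb2 mb0 mb1 x0 x1 x2 m0 m1 v0 v1 : V)
    (hx0 : x0 = δ • xb0) (hx1 : x1 = δ • xb1) (hx2 : x2 = δ • xb2)
    (hm0 : m0 = δ • mb0) (hm1 : m1 = δ • mb1)
    (hv1 : v1 = δ⁻¹ • (m1 - (2 : ℝ) • x2)) (hv0 : v0 = δ⁻¹ • (m0 - (2 : ℝ) • x1)) :
    MF G (xb0 - mb0) mb1 xb2 =
      (δ : EReal) *
        MF F ((δ ^ 2)⁻¹ • (x2 - (2 : ℝ) • x1 + x0) + δ⁻¹ • (v1 - v0)) v1 x2 := by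
  obtain rfl : G = discretization δ F := funext₂ hG
  have hδ0 : δ ≠ 0 := hδ.ne'
  have h_first : xb0 - mb0 + mb1 - xb2 =
      δ • ((δ ^ 2)⁻¹ • (x2 - (2 : ℝ) • x1 + x0) + δ⁻¹ • (v1 - v0)) := by
    subst hv1 hv0 hx0 hx1 hx2 hm0 hm1
    match_scalars <;> field_simp <;> ring
  have h_second : mb1 - (2 : ℝ) • xb2 = v1 := by
    rw [hv1, hm1, hx2, smul_comm (2 : ℝ) δ, ← smul_sub, inv_smul_smul₀ hδ0]
  have h_third : δ ^ 2 • xb2 = δ • x2 := by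
    rw [hx2, smul_smul, sq]
  rw [MF_discretization hδ0, h_first, h_second, h_third, MF_smul hδ]

end InnerProductSpace

/-- Lemma 4.2.  Here `xb0, xb1, xb2` stand for `x̄*(t), x̄*(t+δ), x̄*(t+2δ)`,
`mb0, mb1` for `μ̄*(t), μ̄*(t+δ)`, `x0, x1, x2, m0, m1` for the rescaled vectors and
`v0, v1` for `v*(t), v*(t+δ)`. -/
theorem stmt8 {n : ℕ} (δ : ℝ) (hδ : 0 < δ)
    (F G : En n → En n → Set (En n)) (hFconv : Convex ℝ (gph F))
    (hG : ∀ x y : En n,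
      G x y = {z | ∃ v ∈ F x (δ⁻¹ • (y - x)), z = (2 : ℝ) • y - x + (δ ^ 2) • v})
    (xb0 xb1 xb2 mb0 mb1 x0 x1 x2 m0 m1 v0 v1 : En n)
    (hx0 : x0 = δ • xb0) (hx1 : x1 = δ • xb1) (hx2 : x2 = δ • xb2)
    (hm0 : m0 = δ • mb0) (hm1 : m1 = δ • mb1)
    (hv1 : v1 = δ⁻¹ • (m1 - (2 : ℝ) • x2)) (hv0 : v0 = δ⁻¹ • (m0 - (2 : ℝ) • x1)) :
    MF G (xb0 - mb0) mb1 xb2 =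
      (δ : EReal) *
        MF F ((δ ^ 2)⁻¹ • (x2 - (2 : ℝ) • x1 + x0) + δ⁻¹ • (v1 - v0)) v1 x2 := by
  exact stmt8_general δ hδ F G hG xb0 xb1 xb2 mb0 mb1 x0 x1 x2 m0 m1 v0 v1
    hx0 hx1 hx2 hm0 hm1 hv1 hv0
end
end

section
/- (Weak duality for second order differential inclusions, inequality (32) in Theorem 5.2.) Let F(·,t) : ℝⁿ × ℝⁿ ⇉ ℝⁿ for t ∈ [0,1], Q₀, Q₁ ⊆ ℝⁿ, and φ : ℝⁿ × ℝⁿ → ℝ ∪ {+∞}. Let x be a feasible trajectory of (P_C), and let x*, v* : [0,1] → ℝⁿ be such that x*, x*' are absolutely continuous with x*'' ∈ L¹, v* is absolutely continuous with v*' ∈ L¹, and the function t ↦ M_{F(·,t)}(x*''(t) + v*'(t), v*(t), x*(t)) is real-valued a.e. and Lebesgue integrable on [0,1]. Then φ(x(1), x'(1)) ≥ −φ*(v*(1) + x*'(1), −x*(1)) + ∫₀¹ M_{F(·,t)}(x*''(t) + v*'(t), v*(t), x*(t)) dt − W_{Q₀}(−v*(0) − x*'(0)) − W_{Q₁}(x*(0)),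 as an inequality in ℝ ∪ {±∞}. -/
open scoped RealInnerProductSpace Pointwise
open MeasureTheory Matrix

noncomputable section

/-!
Set `p t = ⟪x t, v* t + x*' t⟫ - ⟪x' t, x* t⟫`. The terms `⟪x' t, x*' t⟫` cancel in the derivative,
`p' t = ⟪x t, x*'' t + v*' t⟫ + ⟪x' t, v* t⟫ - ⟪x'' t, x* t⟫`, which is precisely the expression
minimised over the graph of `F(·, t)` in `M_F`, evaluated at the point `(x t, x' t, x'' t)` of that
graph. Hence `∫ M_F ≤ p 1 - p 0`. Fenchel's inequality bounds `p 1` by `φ + φ*`, and the two support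
functions bound `-p 0`.
-/

section AbsolutelyContinuous

open Set Filter

variable {X Y Z E F G : Type*} [PseudoMetricSpace X] [PseudoMetricSpace Y] [PseudoMetricSpace Z]
  [NormedAddCommGroup E] [NormedSpace ℝ E] [NormedAddCommGroup F] [NormedSpace ℝ F]
  [NormedAddCommGroup G] [NormedSpace ℝ G] {a b c : ℝ}

theorem absolutelyContinuousOnInterval_of_dist_le_add {f : ℝ → X} {g : ℝ → Y} {h : ℝ → Z}
    {C D : ℝ} (hf : AbsolutelyContinuousOnInterval f a b)
    (hg : AbsolutelyContinuousOnInterval g a b)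
    (hle : ∀ s ∈ uIcc a b, ∀ t ∈ uIcc a b,
      dist (h s) (h t) ≤ C * dist (f s) (f t) + D * dist (g s) (g t)) :
    AbsolutelyContinuousOnInterval h a b := by
  unfold AbsolutelyContinuousOnInterval at hf hg
  refine squeeze_zero' (.of_forall fun _ ↦ Finset.sum_nonneg fun _ _ ↦ dist_nonneg) ?_
    (by simpa only [mul_zero, add_zero] using (hf.const_mul C).add (hg.const_mul D))
  refine eventually_inf_principal.2 (.of_forall fun I hI ↦ ?_)
  simp only [Finset.mul_sum, ← Finset.sum_add_distrib]
  exact Finset.sum_le_sum fun i hi ↦ hle _ (hI.1 i hi).1 _ (hI.1 i hi).2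

theorem absolutelyContinuousOnInterval_bilinear (B : E →L[ℝ] F →L[ℝ] G) {f : ℝ → E} {g : ℝ → F}
    (hf : AbsolutelyContinuousOnInterval f a b) (hg : AbsolutelyContinuousOnInterval g a b) :
    AbsolutelyContinuousOnInterval (fun t ↦ B (f t) (g t)) a b := by
  obtain ⟨C, hC⟩ := hf.exists_bound
  obtain ⟨D, hD⟩ := hg.exists_bound
  refine absolutelyContinuousOnInterval_of_dist_le_add (C := ‖B‖ * D) (D := ‖B‖ * C) hf hg
    fun s hs t ht ↦ ?_
  simp only [dist_eq_norm]
  calc ‖B (f s) (g s) - B (f t) (g t)‖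
      = ‖B (f s - f t) (g s) + B (f t) (g s - g t)‖ := by
        simp only [map_sub, _root_.sub_apply, sub_add_sub_cancel]
    _ ≤ ‖B‖ * ‖f s - f t‖ * ‖g s‖ + ‖B‖ * ‖f t‖ * ‖g s - g t‖ :=
        (norm_add_le _ _).trans (add_le_add (B.le_opNorm₂ _ _) (B.le_opNorm₂ _ _))
    _ ≤ ‖B‖ * ‖f s - f t‖ * D + ‖B‖ * C * ‖g s - g t‖ := by
        gcongr
        exacts [hD s hs, hC t ht]
    _ = ‖B‖ * D * ‖f s - f t‖ + ‖B‖ * C * ‖g s - g t‖ := by ring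

theorem absolutelyContinuousOnInterval_integral {f : ℝ → E} (hf : IntervalIntegrable f volume a b)
    (hc : c ∈ uIcc a b) : AbsolutelyContinuousOnInterval (fun t ↦ ∫ s in c..t, f s) a b := by
  have hnorm := hf.norm.absolutelyContinuousOnInterval_intervalIntegral hc
  refine absolutelyContinuousOnInterval_of_dist_le_add (C := 1) (D := 0) hnorm hnorm
    fun s hs t ht ↦ ?_
  have hf_sub {u : ℝ} (hu : u ∈ uIcc a b) : IntervalIntegrable f volume c u :=
    hf.mono_set (uIcc_subset_uIcc hc hu)
  rw [one_mul, zero_mul, add_zero, dist_eq_norm, Real.dist_eq,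
    intervalIntegral.integral_interval_sub_left (hf_sub hs) (hf_sub ht),
    intervalIntegral.integral_interval_sub_left (hf_sub hs).norm (hf_sub ht).norm]
  exact intervalIntegral.norm_integral_le_abs_integral_norm

theorem intervalIntegrable_bilinear_continuousOn (B : E →L[ℝ] F →L[ℝ] G) {f : ℝ → E} {g : ℝ → F}
    (hf : IntervalIntegrable f volume a b) (hg : ContinuousOn g (uIcc a b)) :
    IntervalIntegrable (fun t ↦ B (f t) (g t)) volume a b := by
  obtain ⟨C, hC⟩ := isCompact_uIcc.exists_bound_of_continuousOn hg
  refine intervalIntegrable_iff.2 (B.integrable_of_bilin_of_bdd_right C hf.def' ?_ ?_)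
  · exact hg.aestronglyMeasurable_of_subset_isCompact isCompact_uIcc measurableSet_uIoc
      uIoc_subset_uIcc
  · exact (ae_restrict_mem measurableSet_uIoc).mono fun t ht ↦ hC t (uIoc_subset_uIcc ht)

end AbsolutelyContinuous

/-- `f` is an indefinite Bochner integral of `f'` on the interval with endpoints `a` and `b`:
absolute continuity on that interval together with the choice of an integrable derivative. On
`[0, 1]` and in `ℝⁿ` this is the notion `AC`. -/
structure IsPrimitiveOn {E : Type*} [NormedAddCommGroup E] [NormedSpace ℝ E]
    (f f' : ℝ → E) (a b : ℝ) : Prop where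
  intervalIntegrable : IntervalIntegrable f' volume a b
  eq_add_integral : ∀ t ∈ Set.uIcc a b, f t = f a + ∫ s in a..t, f' s

namespace IsPrimitiveOn

open Set

variable {E F G : Type*} [NormedAddCommGroup E] [NormedSpace ℝ E] [NormedAddCommGroup F]
  [NormedSpace ℝ F] [NormedAddCommGroup G] [NormedSpace ℝ G] {a b : ℝ}

theorem integral_eq_sub {f f' : ℝ → E} (hf : IsPrimitiveOn f f' a b) :
    ∫ t in a..b, f' t = f b - f a :=
  eq_sub_of_add_eq' (hf.eq_add_integral b right_mem_uIcc).symm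

theorem add {f f' g g' : ℝ → E} (hf : IsPrimitiveOn f f' a b) (hg : IsPrimitiveOn g g' a b) :
    IsPrimitiveOn (fun t ↦ f t + g t) (fun t ↦ f' t + g' t) a b where
  intervalIntegrable := hf.intervalIntegrable.add hg.intervalIntegrable
  eq_add_integral t ht := by
    have hsub : uIcc a t ⊆ uIcc a b := uIcc_subset_uIcc_left ht
    rw [intervalIntegral.integral_add (hf.intervalIntegrable.mono_set hsub)
      (hg.intervalIntegrable.mono_set hsub), hf.eq_add_integral t ht, hg.eq_add_integral t ht,
      add_add_add_comm]

theorem neg {f f' : ℝ → E} (hf : IsPrimitiveOn f f' a b) :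
    IsPrimitiveOn (fun t ↦ -f t) (fun t ↦ -f' t) a b where
  intervalIntegrable := hf.intervalIntegrable.neg
  eq_add_integral t ht := by
    rw [intervalIntegral.integral_neg, hf.eq_add_integral t ht, neg_add]

theorem sub {f f' g g' : ℝ → E} (hf : IsPrimitiveOn f f' a b) (hg : IsPrimitiveOn g g' a b) :
    IsPrimitiveOn (fun t ↦ f t - g t) (fun t ↦ f' t - g' t) a b := by
  simpa only [sub_eq_add_neg] using hf.add hg.neg

theorem absolutelyContinuousOnInterval {f f' : ℝ → E} (hf : IsPrimitiveOn f f' a b) :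
    AbsolutelyContinuousOnInterval f a b := by
  have hint := absolutelyContinuousOnInterval_integral hf.intervalIntegrable left_mem_uIcc
  refine absolutelyContinuousOnInterval_of_dist_le_add (C := 1) (D := 0) hint hint
    fun s hs t ht ↦ ?_
  rw [hf.eq_add_integral s hs, hf.eq_add_integral t ht, dist_add_left, one_mul, zero_mul, add_zero]

theorem ae_hasDerivAt [CompleteSpace E] {f f' : ℝ → E} (hf : IsPrimitiveOn f f' a b) :
    ∀ᵐ t, t ∈ uIcc a b → HasDerivAt f (f' t) t := by
  filter_upwards [hf.intervalIntegrable.ae_hasDerivAt_integral, Measure.ae_ne volume (min a b),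
    Measure.ae_ne volume (max a b)] with t hderiv hmin hmax ht
  refine ((hderiv ht a left_mem_uIcc).const_add (f a)).congr_of_eventuallyEq ?_
  filter_upwards [Icc_mem_nhds (lt_of_le_of_ne ht.1 hmin.symm) (lt_of_le_of_ne ht.2 hmax)]
    using hf.eq_add_integral

theorem of_ae_hasDerivAt [CompleteSpace E] {f f' : ℝ → E}
    (hf : AbsolutelyContinuousOnInterval f a b) (hf' : IntervalIntegrable f' volume a b)
    (hderiv : ∀ᵐ t, t ∈ uIcc a b → HasDerivAt f (f' t) t) : IsPrimitiveOn f f' a b where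
  intervalIntegrable := hf'
  eq_add_integral := by
    have hdiff_deriv :
        ∀ᵐ t, t ∈ uIcc a b → HasDerivAt (fun t ↦ f t - ∫ s in a..t, f' s) 0 t := by
      filter_upwards [hderiv, hf'.ae_hasDerivAt_integral] with t hft hint ht
      simpa only [sub_self] using (hft ht).fun_sub (hint ht a left_mem_uIcc)
    obtain ⟨C, hC⟩ := (hf.fun_sub
      (absolutelyContinuousOnInterval_integral hf' left_mem_uIcc)).const_of_ae_hasDerivAt_zero
        hdiff_deriv
    have hfa : f a = C := by
      simpa only [intervalIntegral.integral_same, sub_zero] using hC a left_mem_uIcc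
    exact fun t ht ↦ by rw [hfa, ← hC t ht, sub_add_cancel]

theorem bilinear [CompleteSpace E] [CompleteSpace F] [CompleteSpace G] (B : E →L[ℝ] F →L[ℝ] G)
    {f f' : ℝ → E} {g g' : ℝ → F} (hf : IsPrimitiveOn f f' a b) (hg : IsPrimitiveOn g g' a b) :
    IsPrimitiveOn (fun t ↦ B (f t) (g t)) (fun t ↦ B (f t) (g' t) + B (f' t) (g t)) a b := by
  have hf_ac := hf.absolutelyContinuousOnInterval
  have hg_ac := hg.absolutelyContinuousOnInterval
  refine of_ae_hasDerivAt (absolutelyContinuousOnInterval_bilinear B hf_ac hg_ac) ?_ ?_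
  · exact (intervalIntegrable_bilinear_continuousOn B.flip hg.intervalIntegrable
      hf_ac.continuousOn).add
        (intervalIntegrable_bilinear_continuousOn B hf.intervalIntegrable hg_ac.continuousOn)
  · filter_upwards [hf.ae_hasDerivAt, hg.ae_hasDerivAt] with t hft hgt ht
    exact B.hasDerivAt_of_bilinear (fun _ ↦ hft ht) (fun _ ↦ hgt ht)

theorem inner {V : Type*} [NormedAddCommGroup V] [InnerProductSpace ℝ V] [CompleteSpace V]
    {f f' g g' : ℝ → V} (hf : IsPrimitiveOn f f' a b) (hg : IsPrimitiveOn g g' a b) :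
    IsPrimitiveOn (fun t ↦ ⟪f t, g t⟫) (fun t ↦ ⟪f t, g' t⟫ + ⟪f' t, g t⟫) a b :=
  hf.bilinear (innerSL ℝ) hg

end IsPrimitiveOn

theorem AC.isPrimitiveOn {n : ℕ} {f f' : ℝ → En n} (hf : AC f f') : IsPrimitiveOn f f' 0 1 where
  intervalIntegrable := (intervalIntegrable_iff_integrableOn_Icc_of_le zero_le_one).2 hf.1
  eq_add_integral t ht := hf.2 t (Set.uIcc_of_le (zero_le_one' ℝ) ▸ ht)

section Duality

variable {V W : Type*} [NormedAddCommGroup V] [InnerProductSpace ℝ V]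
  [NormedAddCommGroup W] [InnerProductSpace ℝ W]

theorem inner_sub_fconj2_le (φ : V × W → EReal) (x u : V) (y w : W) :
    ((⟪x, u⟫ + ⟪y, w⟫ : ℝ) : EReal) - fconj2 φ u w ≤ φ (x, y) := by
  have hle : ((⟪x, u⟫ + ⟪y, w⟫ : ℝ) : EReal) - φ (x, y) ≤ fconj2 φ u w :=
    le_iSup (fun p : V × W ↦ ((⟪p.1, u⟫ + ⟪p.2, w⟫ : ℝ) : EReal) - φ p) (x, y)
  have hneg : -φ (x, y) ≤ fconj2 φ u w - ((⟪x, u⟫ + ⟪y, w⟫ : ℝ) : EReal) :=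
    (EReal.le_sub_iff_add_le (.inl (EReal.coe_ne_bot _)) (.inl (EReal.coe_ne_top _))).2
      (add_comm (-φ (x, y)) _ ▸ hle)
  rw [sub_eq_add_neg, add_comm,
    ← EReal.neg_sub (.inr (EReal.coe_ne_bot _)) (.inr (EReal.coe_ne_top _))]
  exact EReal.neg_le_of_neg_le hneg

theorem inner_le_suppFn {A : Set V} {x : V} (hx : x ∈ A) (u : V) :
    ((⟪x, u⟫ : ℝ) : EReal) ≤ suppFn A u :=
  le_iSup₂_of_le x hx le_rfl

theorem MF_le {F : V → V → Set V} {x y z : V} (hz : z ∈ F x y) (x' y' z' : V) :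
    MF F x' y' z' ≤ ((⟪x, x'⟫ + ⟪y, y'⟫ - ⟪z, z'⟫ : ℝ) : EReal) :=
  iInf_le_of_le x <| iInf_le_of_le y <| iInf₂_le z hz

variable [CompleteSpace V] {a b : ℝ} {x x' x'' xs xs' xs'' vs vs' : ℝ → V}

theorem isPrimitiveOn_inner_sub_inner
    (hx : IsPrimitiveOn x x' a b) (hx' : IsPrimitiveOn x' x'' a b)
    (hxs : IsPrimitiveOn xs xs' a b) (hxs' : IsPrimitiveOn xs' xs'' a b)
    (hvs : IsPrimitiveOn vs vs' a b) :
    IsPrimitiveOn (fun t ↦ ⟪x t, vs t + xs' t⟫ - ⟪x' t, xs t⟫)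
      (fun t ↦ ⟪x t, xs'' t + vs' t⟫ + ⟪x' t, vs t⟫ - ⟪x'' t, xs t⟫) a b := by
  convert (hx.inner (hvs.add hxs')).sub (hx'.inner hxs) using 2 with t
  simp only [inner_add_right]
  ring

theorem integral_le_of_le_MF {F : ℝ → V → V → Set V} {g : ℝ → ℝ} (hab : a ≤ b)
    (hx : IsPrimitiveOn x x' a b) (hx' : IsPrimitiveOn x' x'' a b)
    (hxs : IsPrimitiveOn xs xs' a b) (hxs' : IsPrimitiveOn xs' xs'' a b)
    (hvs : IsPrimitiveOn vs vs' a b)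
    (hincl : ∀ᵐ t ∂volume.restrict (Set.Icc a b), x'' t ∈ F t (x t) (x' t))
    (hg : IntegrableOn g (Set.Icc a b))
    (hle : ∀ᵐ t ∂volume.restrict (Set.Icc a b),
      (g t : EReal) ≤ MF (F t) (xs'' t + vs' t) (vs t) (xs t)) :
    ∫ t in Set.Icc a b, g t ≤
      (⟪x b, vs b + xs' b⟫ - ⟪x' b, xs b⟫) - (⟪x a, vs a + xs' a⟫ - ⟪x' a, xs a⟫) := by
  have hp := isPrimitiveOn_inner_sub_inner hx hx' hxs hxs' hvs
  rw [← hp.integral_eq_sub, integral_Icc_eq_integral_Ioc, ← intervalIntegral.integral_of_le hab]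
  refine intervalIntegral.integral_mono_ae_restrict hab
    ((intervalIntegrable_iff_integrableOn_Icc_of_le hab).2 hg) hp.intervalIntegrable ?_
  filter_upwards [hincl, hle] with t hmem hgt
  exact EReal.coe_le_coe_iff.1 (hgt.trans (MF_le hmem _ _ _))

end Duality

theorem stmt15_general {V : Type*} [NormedAddCommGroup V] [InnerProductSpace ℝ V]
    [CompleteSpace V] {a b : ℝ} (hab : a ≤ b)
    (F : ℝ → V → V → Set V) (Q₀ Q₁ : Set V) (φ : V × V → EReal)
    (x x' x'' : ℝ → V) (hx : IsPrimitiveOn x x' a b) (hx' : IsPrimitiveOn x' x'' a b)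
    (hincl : ∀ᵐ t ∂volume.restrict (Set.Icc a b), x'' t ∈ F t (x t) (x' t))
    (hQ₀ : x a ∈ Q₀) (hQ₁ : x' a ∈ Q₁)
    (xs xs' xs'' vs vs' : ℝ → V) (hxs : IsPrimitiveOn xs xs' a b)
    (hxs' : IsPrimitiveOn xs' xs'' a b) (hvs : IsPrimitiveOn vs vs' a b)
    (g : ℝ → ℝ) (hg : IntegrableOn g (Set.Icc a b))
    (hrepr : ∀ᵐ t ∂volume.restrict (Set.Icc a b),
      MF (F t) (xs'' t + vs' t) (vs t) (xs t) = (g t : EReal)) :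
    -(fconj2 φ (vs b + xs' b) (-(xs b))) + ((∫ t in Set.Icc a b, g t : ℝ) : EReal)
      - suppFn Q₀ (-(vs a) - xs' a) - suppFn Q₁ (xs a) ≤ φ (x b, x' b) := by
  have hint := integral_le_of_le_MF hab hx hx' hxs hxs' hvs hincl hg
    (hrepr.mono fun _ h ↦ h.ge)
  set I : ℝ := ∫ t in Set.Icc a b, g t
  have hbdry : I - ⟪x a, -(vs a) - xs' a⟫ - ⟪x' a, xs a⟫
      ≤ ⟪x b, vs b + xs' b⟫ + ⟪x' b, -(xs b)⟫ := by
    simp only [inner_add_right, inner_sub_right, inner_neg_right] at hint ⊢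
    linarith
  calc -(fconj2 φ (vs b + xs' b) (-(xs b))) + (I : EReal)
        - suppFn Q₀ (-(vs a) - xs' a) - suppFn Q₁ (xs a)
      ≤ -(fconj2 φ (vs b + xs' b) (-(xs b))) + (I : EReal)
        - (⟪x a, -(vs a) - xs' a⟫ : ℝ) - (⟪x' a, xs a⟫ : ℝ) :=
        EReal.sub_le_sub (EReal.sub_le_sub le_rfl (inner_le_suppFn hQ₀ _)) (inner_le_suppFn hQ₁ _)
    _ = ((I - ⟪x a, -(vs a) - xs' a⟫ - ⟪x' a, xs a⟫ : ℝ) : EReal)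
        - fconj2 φ (vs b + xs' b) (-(xs b)) := by
        rw [add_sub_assoc, add_sub_assoc, add_comm, ← sub_eq_add_neg, EReal.coe_sub, EReal.coe_sub]
    _ ≤ ((⟪x b, vs b + xs' b⟫ + ⟪x' b, -(xs b)⟫ : ℝ) : EReal)
        - fconj2 φ (vs b + xs' b) (-(xs b)) :=
        EReal.sub_le_sub (EReal.coe_le_coe hbdry) le_rfl
    _ ≤ φ (x b, x' b) := inner_sub_fconj2_le φ _ _ _ _

/-- weak duality for second order differential inclusions
(inequality (32) in Theorem 5.2).  Here `xs, xs', xs''` stand for `x*, x*', x*''`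
and `vs, vs'` for `v*, v*'`; `g` is the a.e. real value of the integrand. -/
theorem stmt15 {n : ℕ}
    (F : ℝ → En n → En n → Set (En n)) (Q₀ Q₁ : Set (En n))
    (φ : En n × En n → EReal)
    (x x' x'' : ℝ → En n) (hx : FeasTraj F Q₀ Q₁ x x' x'')
    (xs xs' xs'' vs vs' : ℝ → En n)
    (hxsAC : AC xs xs') (hxs'AC : AC xs' xs'') (hvsAC : AC vs vs')
    (g : ℝ → ℝ) (hg : MeasureTheory.IntegrableOn g (Set.Icc (0 : ℝ) 1))
    (hrepr : ∀ᵐ t ∂(volume.restrict (Set.Icc (0 : ℝ) 1)),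
      MF (F t) (xs'' t + vs' t) (vs t) (xs t) = ((g t : ℝ) : EReal)) :
    -(fconj2 φ (vs 1 + xs' 1) (-(xs 1)))
      + (((∫ t in Set.Icc (0 : ℝ) 1, g t) : ℝ) : EReal)
      - suppFn Q₀ (-(vs 0) - xs' 0) - suppFn Q₁ (xs 0)
      ≤ φ (x 1, x' 1) := by
  exact stmt15_general zero_le_one F Q₀ Q₁ φ x x' x'' (AC.isPrimitiveOn ⟨hx.int', hx.hx⟩)
    (AC.isPrimitiveOn ⟨hx.int'', hx.hx'⟩) hx.incl hx.q0 hx.q1 xs xs' xs'' vs vs'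
    hxsAC.isPrimitiveOn hxs'AC.isPrimitiveOn hvsAC.isPrimitiveOn g hg hrepr
end
end
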